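/- arXiv:2211.03292 — 3 statements merged into one kernel-verified Lean document; each statement's English description precedes it below -/
import Mathlib

section
/- For 0 <= k <= n/2, the sum of binomial coefficients C(n,0) + C(n,1) + ... + C(n,k) is at most 2^{H(k/n) * n}, where H(x) = x*log2(1/x) + (1-x)*log2(1/(1-x)) is the binary entropy function (with H(0)=0). -/
/-- The binary entropy function `H(x) = x log₂(1/x) + (1-x) log₂(1/(1-x))`
(with the convention `H(0) = 0`, which holds automatically since `1/0 = 0`
and `log 0 = 0` in Lean). -/
noncomputable def binH (x : ℝ) : ℝ :=
  x * Real.logb 2 (1 / x) + (1 - x) * Real.logb 2 (1 / (1 - x))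

theorem stmt8 (n k : ℕ) (hn : 0 < n) (hk : 2 * k ≤ n) :
    (∑ i ∈ Finset.range (k + 1), (n.choose i : ℝ)) ≤
      (2 : ℝ) ^ (binH ((k : ℝ) / (n : ℝ)) * (n : ℝ)) := by
  have hn' : (0 : ℝ) < n := by exact_mod_cast hn
  rcases Nat.eq_zero_or_pos k with rfl | hk0
  · simp [binH]
  have hk' : (0 : ℝ) < k := by exact_mod_cast hk0
  have hkn : k ≤ n := by omega
  have hk2 : (2 : ℝ) * k ≤ n := by exact_mod_cast hk
  obtain ⟨p, hp⟩ : ∃ p : ℝ, p = (k : ℝ) / n := ⟨_, rfl⟩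
  obtain ⟨q, hq⟩ : ∃ q : ℝ, q = 1 - p := ⟨_, rfl⟩
  have hp0 : 0 < p := by rw [hp]; positivity
  have hpn : p * n = k := by rw [hp]; field_simp
  have hpq : p ≤ q := by
    have : p ≤ 1 / 2 := by
      rw [hp, div_le_iff₀ hn']; linarith
    linarith
  have hq0 : 0 < q := by linarith
  have hqn : q * n = ((n - k : ℕ) : ℝ) := by
    rw [Nat.cast_sub hkn, hq]; linarith
  have key : (2 : ℝ) ^ (binH p * (n : ℝ)) = (p ^ k * q ^ (n - k))⁻¹ := by
    have e : binH p * (n : ℝ) = Real.logb 2 (1 / p) * (k : ℝ)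
        + Real.logb 2 (1 / q) * ((n - k : ℕ) : ℝ) := by
      rw [← hpn, ← hqn, binH, ← hq]; ring
    rw [e, Real.rpow_add (by norm_num), Real.rpow_mul (by norm_num),
      Real.rpow_mul (by norm_num), Real.rpow_logb (by norm_num) (by norm_num) (by positivity),
      Real.rpow_logb (by norm_num) (by norm_num) (by positivity),
      Real.rpow_natCast, Real.rpow_natCast, mul_inv, one_div, one_div, inv_pow, inv_pow]
  rw [← hp, key, ← one_div, le_div_iff₀ (by positivity), Finset.sum_mul]
  calc ∑ i ∈ Finset.range (k + 1), (n.choose i : ℝ) * (p ^ k * q ^ (n - k))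
      ≤ ∑ i ∈ Finset.range (k + 1), p ^ i * q ^ (n - i) * (n.choose i : ℝ) := by
        apply Finset.sum_le_sum
        intro i hi
        have hik : i ≤ k := by
          have := Finset.mem_range.mp hi
          omega
        rw [mul_comm]
        apply mul_le_mul_of_nonneg_right _ (Nat.cast_nonneg _)
        have e1 : p ^ k = p ^ i * p ^ (k - i) := by
          rw [← pow_add]; congr 1; omega
        have e2 : q ^ (n - i) = q ^ (k - i) * q ^ (n - k) := by
          rw [← pow_add]; congr 1; omega
        rw [e1, e2, mul_assoc]
        gcongr
    _ ≤ ∑ i ∈ Finset.range (n + 1), p ^ i * q ^ (n - i) * (n.choose i : ℝ) := by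
        apply Finset.sum_le_sum_of_subset_of_nonneg
        · intro i hi
          simp only [Finset.mem_range] at hi ⊢
          omega
        · intros
          positivity
    _ = 1 := by
        rw [← add_pow, hq]; simp
end

section
/- There exists a constant c <= 0.88999 such that for all sufficiently large n and every binary string z of length n, the probability over a uniform random X in {0,1}^n that |LCS(X, z)| >= 0.88999*n is o(1). Consequently, max_z E_X[|LCS(X,z)|] <= (0.88999 + o(1)) * n. -/
/-- Length of a longest common subsequence of two binary strings. -/
noncomputable def lcsLen (x y : List Bool) : ℕ :=
  sSup {n | ∃ s : List Bool, s.length = n ∧ s.Sublist x ∧ s.Sublist y}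

/-- The number of binary strings of length `n` containing `s` is at most `9^n / 8^|s|`. -/
theorem count_super (n : ℕ) : ∀ s : List Bool,
    (∑ x : Fin n → Bool, if s.Sublist (List.ofFn x) then 1 else 0) * 8 ^ s.length ≤ 9 ^ n := by
  induction n with
  | zero =>
    intro s
    cases s with
    | nil => simp
    | cons a s => simp
  | succ n ih =>
    intro s
    cases s with
    | nil =>
      simp
      exact Nat.pow_le_pow_left (by norm_num) _
    | cons a s =>
      have key : (∑ x : Fin (n+1) → Bool, if (a :: s).Sublist (List.ofFn x) then 1 else 0)
          = (∑ x : Fin n → Bool, if s.Sublist (List.ofFn x) then 1 else 0)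
            + (∑ x : Fin n → Bool, if (a :: s).Sublist (List.ofFn x) then 1 else 0) := by
        rw [← (Fin.consEquiv (fun _ : Fin (n+1) => Bool)).sum_comp, Fintype.sum_prod_type]
        have hs : ∀ l : List Bool, (a :: s).Sublist l → s.Sublist l :=
          fun l h => (List.sublist_cons_self a s).trans h
        have hor : ∀ l : List Bool, ((a :: s).Sublist l ∨ s.Sublist l) ↔ s.Sublist l :=
          fun l => ⟨fun h => h.elim (hs l) id, Or.inr⟩
        cases a <;> simp [Fin.consEquiv, List.ofFn_succ, List.cons_sublist_cons', hor, add_comm]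
      rw [key]
      have h1 := ih s
      have h2 := ih (a :: s)
      simp only [List.length_cons, pow_succ] at *
      nlinarith

theorem count_sub (n m : ℕ) : n.choose m * 8 ^ m ≤ 9 ^ n := by
  by_cases h : m ≤ n
  · have := add_pow 8 1 n
    simp only [one_pow, mul_one] at this
    norm_num at this
    rw [this, mul_comm]
    exact Finset.single_le_sum (f := fun m => 8 ^ m * n.choose m) (fun _ _ => Nat.zero_le _)
      (Finset.mem_range.2 (by omega))
  · rw [Nat.choose_eq_zero_of_lt (by omega)]; simp

theorem lcs_bdd (x y : List Bool) :
    BddAbove {n | ∃ s : List Bool, s.length = n ∧ s.Sublist x ∧ s.Sublist y} :=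
  ⟨x.length, by rintro _ ⟨s, rfl, h, _⟩; exact h.length_le⟩

theorem lcs_mem (x y : List Bool) :
    ∃ s : List Bool, s.length = lcsLen x y ∧ s.Sublist x ∧ s.Sublist y :=
  Nat.sSup_mem (s := {n | ∃ s : List Bool, s.length = n ∧ s.Sublist x ∧ s.Sublist y})
    ⟨0, [], by simp⟩ (lcs_bdd x y)

open Classical in
theorem count_lcs (n m : ℕ) (z : List Bool) (hz : z.length = n) :
    (Finset.univ.filter fun x : Fin n → Bool => m ≤ lcsLen (List.ofFn x) z).card * 64 ^ m
      ≤ 81 ^ n := by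
  have hsub : (Finset.univ.filter fun x : Fin n → Bool => m ≤ lcsLen (List.ofFn x) z) ⊆
      (z.sublistsLen m).toFinset.biUnion
        (fun s => Finset.univ.filter fun x : Fin n → Bool => s.Sublist (List.ofFn x)) := by
    intro x hx
    simp only [Finset.mem_filter, Finset.mem_univ, true_and] at hx
    obtain ⟨s, hs, h1, h2⟩ := lcs_mem (List.ofFn x) z
    simp only [Finset.mem_biUnion, List.mem_toFinset, List.mem_sublistsLen, Finset.mem_filter,
      Finset.mem_univ, true_and]
    exact ⟨s.take m, ⟨(List.take_sublist _ _).trans h2, by simp; omega⟩,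
      (List.take_sublist _ _).trans h1⟩
  have h8 : (Finset.univ.filter fun x : Fin n → Bool => m ≤ lcsLen (List.ofFn x) z).card * 8 ^ m
      ≤ n.choose m * 9 ^ n := by
    calc _ ≤ (∑ s ∈ (z.sublistsLen m).toFinset,
            (Finset.univ.filter fun x : Fin n → Bool => s.Sublist (List.ofFn x)).card) * 8 ^ m :=
          Nat.mul_le_mul_right _ ((Finset.card_le_card hsub).trans Finset.card_biUnion_le)
      _ = ∑ s ∈ (z.sublistsLen m).toFinset,
            (Finset.univ.filter fun x : Fin n → Bool => s.Sublist (List.ofFn x)).card * 8 ^ m :=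
          Finset.sum_mul _ _ _
      _ ≤ ∑ s ∈ (z.sublistsLen m).toFinset, 9 ^ n := by
          apply Finset.sum_le_sum
          intro s hs
          simp only [List.mem_toFinset, List.mem_sublistsLen] at hs
          have := count_super n s
          rw [hs.2] at this
          rw [Finset.card_filter]
          convert this
      _ ≤ _ := by
          rw [Finset.sum_const, smul_eq_mul]
          apply Nat.mul_le_mul_right
          refine (List.toFinset_card_le _).trans ?_
          rw [List.length_sublistsLen, hz]
  have e1 : (64:ℕ) ^ m = 8 ^ m * 8 ^ m := by rw [← mul_pow]; norm_num
  have e2 : (81:ℕ) ^ n = 9 ^ n * 9 ^ n := by rw [← mul_pow]; norm_num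
  rw [e1, e2]
  calc _ = _ * 8 ^ m * 8 ^ m := (mul_assoc _ _ _).symm
    _ ≤ (n.choose m * 9 ^ n) * 8 ^ m := Nat.mul_le_mul_right _ h8
    _ = (n.choose m * 8 ^ m) * 9 ^ n := by ring
    _ ≤ _ := Nat.mul_le_mul_right _ (count_sub n m)

set_option exponentiation.threshold 5000 in
theorem q_lt : (81/2 : ℝ) / (2:ℝ) ^ (6 * 0.88999 : ℝ) < 1 := by
  rw [div_lt_one (by positivity)]
  have h1 : (2:ℝ) ^ ((1351 / 253 : ℝ)) ≤ (2:ℝ) ^ (6 * 0.88999 : ℝ) :=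
    Real.rpow_le_rpow_of_exponent_le (by norm_num) (by norm_num)
  refine lt_of_lt_of_le ?_ h1
  refine lt_of_pow_lt_pow_left₀ 253 (by positivity) ?_
  rw [← Real.rpow_natCast ((2:ℝ) ^ _), ← Real.rpow_mul (by norm_num)]
  rw [show ((1351/253 : ℝ) * ((253:ℕ):ℝ)) = ((1351:ℕ):ℝ) by norm_num, Real.rpow_natCast]
  norm_num

open Classical in
/-- For every `z ∈ {0,1}ⁿ`, the probability over uniform `X ∈ {0,1}ⁿ` that
`|LCS(X,z)| ≥ 0.88999 n` is `o(1)`; consequently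
`max_z E_X[|LCS(X,z)|] ≤ (0.88999 + o(1)) n`. -/
theorem stmt13 :
    ∀ ε : ℝ, 0 < ε → ∃ N : ℕ, ∀ n : ℕ, N ≤ n → ∀ z : List Bool, z.length = n →
      ((Finset.univ.filter fun x : Fin n → Bool =>
          (0.88999 : ℝ) * n ≤ (lcsLen (List.ofFn x) z : ℝ)).card : ℝ) / 2 ^ n ≤ ε ∧
      (∑ x : Fin n → Bool, (lcsLen (List.ofFn x) z : ℝ)) / 2 ^ n ≤ (0.88999 + ε) * n := by
  intro ε hε
  obtain ⟨N, hN⟩ := exists_pow_lt_of_lt_one hε q_lt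
  refine ⟨N, fun n hn z hz => ?_⟩
  have hq0 : (0:ℝ) ≤ (81/2 : ℝ) / (2:ℝ) ^ (6 * 0.88999 : ℝ) := by positivity
  have hqn := (pow_le_pow_of_le_one hq0 q_lt.le hn).trans hN.le
  have first : ((Finset.univ.filter fun x : Fin n → Bool =>
          (0.88999 : ℝ) * n ≤ (lcsLen (List.ofFn x) z : ℝ)).card : ℝ) / 2 ^ n ≤ ε := by
    refine le_trans ?_ hqn
    have hc := count_lcs n ⌈(0.88999 : ℝ) * n⌉₊ z hz
    simp only [Nat.ceil_le] at hc
    have hc' : ((Finset.univ.filter fun x : Fin n → Bool =>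
          (0.88999 : ℝ) * n ≤ (lcsLen (List.ofFn x) z : ℝ)).card : ℝ)
          * 64 ^ ⌈(0.88999 : ℝ) * n⌉₊ ≤ 81 ^ n := by exact_mod_cast hc
    have h64 : ((2:ℝ) ^ (6 * 0.88999 : ℝ)) ^ n ≤ 64 ^ ⌈(0.88999 : ℝ) * n⌉₊ := by
      rw [show (64:ℝ) = 2 ^ 6 by norm_num, ← pow_mul, ← Real.rpow_natCast, ← Real.rpow_natCast,
        ← Real.rpow_mul (by norm_num)]
      apply Real.rpow_le_rpow_of_exponent_le (by norm_num)
      have := Nat.le_ceil ((0.88999 : ℝ) * n)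
      push_cast
      linarith
    rw [div_pow, div_pow, div_right_comm]
    apply div_le_div_of_nonneg_right _ (by positivity)
    rw [le_div_iff₀ (by positivity)]
    exact (mul_le_mul_of_nonneg_left h64 (by positivity)).trans hc'
  refine ⟨first, ?_⟩
  rw [div_le_iff₀ (by positivity)] at first ⊢
  have hle : ∀ x : Fin n → Bool, (lcsLen (List.ofFn x) z : ℝ) ≤ 0.88999 * n +
      (if (0.88999 : ℝ) * n ≤ (lcsLen (List.ofFn x) z : ℝ) then 1 else 0) * n := by
    intro x
    split_ifs with h
    · obtain ⟨s, hs, h1, -⟩ := lcs_mem (List.ofFn x) z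
      have h2 := h1.length_le
      rw [hs, List.length_ofFn] at h2
      have : (lcsLen (List.ofFn x) z : ℝ) ≤ n := by exact_mod_cast h2
      have : (0:ℝ) ≤ n := by positivity
      linarith
    · linarith
  refine (Finset.sum_le_sum fun x _ => hle x).trans ?_
  rw [Finset.sum_add_distrib, ← Finset.sum_mul, ← Finset.sum_mul, Finset.sum_boole]
  simp only [Finset.sum_const, Finset.card_univ, Fintype.card_fun, Fintype.card_bool,
    Fintype.card_fin, nsmul_eq_mul]
  push_cast
  have := mul_le_mul_of_nonneg_right first (Nat.cast_nonneg (α := ℝ) n)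
  linarith
end

section
/- Let M = ((v_1,v'_1),...,(v_t,v'_t)) be a candidate matching (v_1 < ... < v_t, v'_1 < ... < v'_t in [n]) and let S = {s_1 < ... < s_m}, S' = {s'_1 < ... < s'_m} be m-element subsets of [n] with score l, where the score is the number of indices i such that (v_i, v'_i) = (s_j, s'_j) for some common j. Construct random n-bit strings X and X' by: drawing y uniform in {0,1}^m and placing y_j at position s_j of X and at position s'_j of X', and filling all remaining positions of X and X' with independent uniform bits. Then the probability that X_{v_i} = X'_{v'_i} holds for all i in [t] is exactly 2^{-(t-l)}. -/
/-- Fill positions: the `n`-bit string whose bit at position `s j` is `y j`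
(for each `j`), and whose remaining bits are taken from `r`. -/
noncomputable def fill {n m : ℕ} (s : Fin m → Fin n) (y : Fin m → Bool)
    (r : Fin n → Bool) : Fin n → Bool :=
  fun i => if h : ∃ j, s j = i then y h.choose else r i

theorem card_step {V : Type*} [Fintype V] [DecidableEq V] (P : (V → Bool) → Prop)
    [DecidablePred P] (p q : V) (hpq : p ≠ q)
    (hP : ∀ f, P f → P (Function.update f p (!f p))) :
    (Finset.univ.filter (fun f : V → Bool => P f ∧ f p = f q)).card * 2
      = (Finset.univ.filter P).card := by
  have h1 : (Finset.univ.filter (fun f : V → Bool => P f ∧ f p = f q)).card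
      = (Finset.univ.filter (fun f : V → Bool => P f ∧ ¬ f p = f q)).card := by
    apply Finset.card_nbij' (fun f => Function.update f p (!f p))
      (fun f => Function.update f p (!f p))
    · intro f hf
      simp only [Finset.coe_filter, Finset.mem_univ, true_and, Set.mem_ofPred_eq] at hf ⊢
      refine ⟨hP f hf.1, ?_⟩
      rw [Function.update_self, Function.update_of_ne hpq.symm, hf.2]
      simp
    · intro f hf
      simp only [Finset.coe_filter, Finset.mem_univ, true_and, Set.mem_ofPred_eq] at hf ⊢
      refine ⟨hP f hf.1, ?_⟩
      rw [Function.update_self, Function.update_of_ne hpq.symm]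
      have := hf.2
      revert this
      cases f p <;> cases f q <;> simp
    · intro f hf
      simp
    · intro f hf
      simp
  have h2 := Finset.card_filter_add_card_filter_not (s := Finset.univ.filter P)
    (fun f : V → Bool => f p = f q)
  rw [Finset.filter_filter, Finset.filter_filter] at h2
  omega

theorem card_edges {V : Type*} [Fintype V] [DecidableEq V] {t : ℕ} (a b : Fin t → V)
    (F : Finset (Fin t))
    (hF : ∀ i ∈ F, a i ≠ b i ∧ ((∀ k ∈ F, k < i → a i ≠ a k ∧ a i ≠ b k) ∨
      (∀ k ∈ F, k < i → b i ≠ a k ∧ b i ≠ b k))) :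
    (Finset.univ.filter (fun f : V → Bool => ∀ i ∈ F, f (a i) = f (b i))).card * 2 ^ F.card
      = 2 ^ Fintype.card V := by
  induction F using Finset.induction_on_max with
  | empty => simp
  | insert i F hlt ih =>
    have hi : i ∉ F := fun h => lt_irrefl _ (hlt i h)
    have ih' := ih (fun j hj => by
      obtain ⟨h1, h2⟩ := hF j (Finset.mem_insert_of_mem hj)
      refine ⟨h1, h2.imp ?_ ?_⟩
      · intro h k hk
        exact h k (Finset.mem_insert_of_mem hk)
      · intro h k hk
        exact h k (Finset.mem_insert_of_mem hk))
    obtain ⟨hne, hor⟩ := hF i (Finset.mem_insert_self _ _)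
    rw [Finset.card_insert_of_notMem hi, pow_succ', ← mul_assoc, ← ih']
    congr 1
    rcases hor with h | h
    · rw [← card_step (fun f : V → Bool => ∀ i ∈ F, f (a i) = f (b i)) (a i) (b i) hne]
      · congr 2
        ext f
        simp [and_comm]
      · intro f hf k hk
        obtain ⟨h1, h2⟩ := h k (Finset.mem_insert_of_mem hk) (hlt k hk)
        rw [Function.update_of_ne h1.symm, Function.update_of_ne h2.symm]
        exact hf k hk
    · rw [← card_step (fun f : V → Bool => ∀ i ∈ F, f (a i) = f (b i)) (b i) (a i) hne.symm]
      · congr 2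
        ext f
        simp [and_comm, eq_comm (a := f (b i))]
      · intro f hf k hk
        obtain ⟨h1, h2⟩ := h k (Finset.mem_insert_of_mem hk) (hlt k hk)
        rw [Function.update_of_ne h1.symm, Function.update_of_ne h2.symm]
        exact hf k hk

open Classical in
/-- The variable that determines the bit at position `p`. -/
noncomputable def posVar {n m : ℕ} (s : Fin m → Fin n) (e : Fin n → Fin n ⊕ Fin n) (p : Fin n) :
    Fin m ⊕ (Fin n ⊕ Fin n) :=
  if h : ∃ j, s j = p then Sum.inl h.choose else Sum.inr (e p)

theorem posVar_inl {n m : ℕ} {s : Fin m → Fin n} {e : Fin n → Fin n ⊕ Fin n} {p : Fin n}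
    {j : Fin m} (h : posVar s e p = Sum.inl j) : s j = p := by
  unfold posVar at h
  split_ifs at h with h'
  have := h'.choose_spec
  rw [Sum.inl.inj h] at this
  exact this

theorem posVar_inr {n m : ℕ} {s : Fin m → Fin n} {e : Fin n → Fin n ⊕ Fin n} {p : Fin n}
    {x : Fin n ⊕ Fin n} (h : posVar s e p = Sum.inr x) : e p = x := by
  unfold posVar at h
  split_ifs at h with h'
  exact Sum.inr.inj h

theorem posVar_inj {n m : ℕ} {s : Fin m → Fin n} {e : Fin n → Fin n ⊕ Fin n}
    (he : Function.Injective e) : Function.Injective (posVar s e) := by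
  intro p q h
  rcases hq : posVar s e q with j | x
  · rw [hq] at h
    rw [← posVar_inl h, ← posVar_inl hq]
  · rw [hq] at h
    exact he ((posVar_inr h).trans (posVar_inr hq).symm)

theorem posVar_eq {n m : ℕ} {s s' : Fin m → Fin n} {p q : Fin n}
    (h : posVar s Sum.inl p = posVar s' Sum.inr q) : ∃ j, s j = p ∧ s' j = q := by
  rcases hq : posVar s' Sum.inr q with j | x
  · rw [hq] at h
    exact ⟨j, posVar_inl h, posVar_inl hq⟩
  · rw [hq] at h
    have h1 := posVar_inr h
    have h2 := posVar_inr hq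
    rw [← h2] at h1
    cases h1

theorem posVar_apply {n m : ℕ} {s : Fin m → Fin n} (hs : Function.Injective s)
    (e : Fin n → Fin n ⊕ Fin n) (j : Fin m) : posVar s e (s j) = Sum.inl j := by
  have h : ∃ k, s k = s j := ⟨j, rfl⟩
  unfold posVar
  rw [dif_pos h, hs h.choose_spec]

theorem fill_eq {n m : ℕ} (s : Fin m → Fin n) (e : Fin n → Fin n ⊕ Fin n)
    (f : Fin m ⊕ (Fin n ⊕ Fin n) → Bool) (p : Fin n) :
    fill s (fun j => f (Sum.inl j)) (fun i => f (Sum.inr (e i))) p = f (posVar s e p) := by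
  unfold fill posVar
  split_ifs <;> rfl

/-- Given a candidate matching `M = ((v₁,v'₁),…,(v_t,v'_t))` and sets
`S = {s₁ < ⋯ < s_m}`, `S' = {s'₁ < ⋯ < s'_m}` with score `l` (the number of
edges `(vᵢ, v'ᵢ)` equal to `(s_j, s'_j)` for a common `j`), if `X` (resp. `X'`)
places a uniform `y ∈ {0,1}^m` at the positions of `S` (resp. `S'`) and
independent uniform bits elsewhere, then
`Pr[∀ i, X_{vᵢ} = X'_{v'ᵢ}] = 2^{-(t-l)}`. -/
theorem stmt17 (n m t : ℕ) (v v' : Fin t → Fin n) (s s' : Fin m → Fin n)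
    (hv : StrictMono v) (hv' : StrictMono v') (hs : StrictMono s) (hs' : StrictMono s') :
    (Nat.card {ω : (Fin m → Bool) × (Fin n → Bool) × (Fin n → Bool) //
        ∀ i : Fin t, fill s ω.1 ω.2.1 (v i) = fill s' ω.1 ω.2.2 (v' i)} : ℝ)
        / ((2 : ℝ) ^ m * 2 ^ n * 2 ^ n)
      = 1 / 2 ^ (t - Nat.card {i : Fin t // ∃ j : Fin m, s j = v i ∧ s' j = v' i}) := by
  classical
  set a : Fin t → Fin m ⊕ (Fin n ⊕ Fin n) := fun i => posVar s Sum.inl (v i) with ha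
  set b : Fin t → Fin m ⊕ (Fin n ⊕ Fin n) := fun i => posVar s' Sum.inr (v' i) with hb
  have hab : ∀ i, (∃ j : Fin m, s j = v i ∧ s' j = v' i) → a i = b i := by
    rintro i ⟨j, h1, h2⟩
    simp only [ha, hb]
    rw [← h1, ← h2, posVar_apply hs.injective, posVar_apply hs'.injective]
  set F : Finset (Fin t) :=
    Finset.univ.filter (fun i => ¬ ∃ j : Fin m, s j = v i ∧ s' j = v' i) with hFdef
  have key := card_edges a b F (by
    intro i hi
    have hi' : ¬ ∃ j : Fin m, s j = v i ∧ s' j = v' i := (Finset.mem_filter.mp hi).2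
    refine ⟨fun h => hi' (posVar_eq h), ?_⟩
    by_contra hcon
    rw [not_or] at hcon
    obtain ⟨h1, h2⟩ := hcon
    push Not at h1 h2
    obtain ⟨k, -, hk, h1⟩ := h1
    obtain ⟨k', -, hk', h2⟩ := h2
    have e1 := h1 (fun h => hk.ne' (hv.injective (posVar_inj Sum.inl_injective h)))
    have e2 : b i = a k' := by
      by_contra hne
      exact hk'.ne' (hv'.injective (posVar_inj Sum.inr_injective (h2 hne)))
    obtain ⟨j, j1, j2⟩ := posVar_eq e1
    obtain ⟨j', j1', j2'⟩ := posVar_eq e2.symm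
    have l1 : j' < j := hs.lt_iff_lt.mp (by rw [j1, j1']; exact hv hk')
    have l2 : j < j' := hs'.lt_iff_lt.mp (by rw [j2, j2']; exact hv' hk)
    exact lt_asymm l1 l2)
  have hF : t - Nat.card {i : Fin t // ∃ j : Fin m, s j = v i ∧ s' j = v' i} = F.card := by
    have h := Finset.card_filter_add_card_filter_not (s := (Finset.univ : Finset (Fin t)))
      (fun i => ∃ j : Fin m, s j = v i ∧ s' j = v' i)
    rw [Nat.card_eq_fintype_card, Fintype.card_subtype]
    rw [Finset.card_univ, Fintype.card_fin] at h
    refine Nat.sub_eq_of_eq_add ?_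
    rw [add_comm]
    refine h.symm.trans ?_
    congr!
  have hcard : Nat.card {ω : (Fin m → Bool) × (Fin n → Bool) × (Fin n → Bool) //
        ∀ i : Fin t, fill s ω.1 ω.2.1 (v i) = fill s' ω.1 ω.2.2 (v' i)}
      = (Finset.univ.filter (fun f : Fin m ⊕ (Fin n ⊕ Fin n) → Bool =>
          ∀ i ∈ F, f (a i) = f (b i))).card := by
    rw [← Fintype.card_subtype, ← Nat.card_eq_fintype_card]
    symm
    let E : (Fin m ⊕ (Fin n ⊕ Fin n) → Bool) ≃
        (Fin m → Bool) × (Fin n → Bool) × (Fin n → Bool) :=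
      (Equiv.sumArrowEquivProdArrow _ _ _).trans
        ((Equiv.refl _).prodCongr (Equiv.sumArrowEquivProdArrow _ _ _))
    refine Nat.card_congr (E.subtypeEquiv ?_)
    intro f
    have h1 : ∀ i, fill s (E f).1 (E f).2.1 (v i) = f (a i) :=
      fun i => fill_eq s Sum.inl f (v i)
    have h2 : ∀ i, fill s' (E f).1 (E f).2.2 (v' i) = f (b i) :=
      fun i => fill_eq s' Sum.inr f (v' i)
    simp only [h1, h2]
    constructor
    · intro h i
      by_cases hi : ∃ j : Fin m, s j = v i ∧ s' j = v' i
      · rw [hab i hi]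
      · exact h i (Finset.mem_filter.mpr ⟨Finset.mem_univ _, hi⟩)
    · intro h i _
      exact h i
  rw [hF, hcard, div_eq_div_iff (by positivity) (by positivity), one_mul]
  have hV : Fintype.card (Fin m ⊕ (Fin n ⊕ Fin n)) = m + n + n := by
    simp [add_assoc]
  rw [hV, pow_add, pow_add] at key
  exact_mod_cast key
end
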